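/- Let p > 2 and n ≥ 1. Define U(x,y) = (p^p (p−1)^{2−p} (p−2)/4) · ∫₀^{1−1/p} λ^{p−1} u_∞(x/λ, y/λ) dλ for x, y ∈ ℝⁿ. Then U admits the explicit formula: U(x,y) = (1/2)·(p/(p−1))^{p−1}·(|y| − (p−1)|x|)·(|x|+|y|)^{p−1} if |x|+|y| ≤ 1 − 1/p, and U(x,y) = (p²/4)·[ |y|² − |x|² − 2(p−2)|y|/p + (p−1)²(p−2)/p³ ] if |x|+|y| > 1 − 1/p. -/

import Mathlib

/-!
Write `a = ‖x‖`, `b = ‖y‖`, `r = a + b` and `c = 1 - 1 / p`. For `l > 0` the integrand vanishes when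
`r ≤ l`, and for `0 < l ≤ r` it equals
`(b² - a²) l ^ (p - 3) - 2 b l ^ (p - 2) + l ^ (p - 1)`; at `l = r` both descriptions agree, because
`(b - r)² = a²`. Since `p - 3 > -1`, this is integrable at `0`, with primitive
`F l = (b² - a²) l ^ (p - 2) / (p - 2) - 2 b l ^ (p - 1) / (p - 1) + l ^ p / p`.
Hence the integral is `F (min r c)` (`integral_near_zero`, `integral_beyond`). For `r ≤ c` the factor
`b² - a² = (b - a) r` lets `r ^ (p - 1)` be pulled out of `F r`; for `r > c` every term of `F c`
carries `c ^ (p - 2) = (p - 1) ^ (p - 2) / p ^ (p - 2)`, which cancels against the constant.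
-/

open Real MeasureTheory Set intervalIntegral

/-- Burkholder's simple function
`u_∞(x,y) = 0` if `|x|+|y| ≤ 1`, and `(|y|−1)² − |x|²` otherwise. -/
noncomputable def uInf {n : ℕ} (x y : EuclideanSpace ℝ (Fin n)) : ℝ :=
  if ‖x‖ + ‖y‖ ≤ 1 then 0 else (‖y‖ - 1) ^ 2 - ‖x‖ ^ 2

lemma integrand_of_le {n : ℕ} (p : ℝ) (x y : EuclideanSpace ℝ (Fin n)) {l : ℝ} (hl : 0 < l)
    (hlr : l ≤ ‖x‖ + ‖y‖) :
    l ^ (p - 1) * uInf (l⁻¹ • x) (l⁻¹ • y)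
      = (‖y‖ ^ 2 - ‖x‖ ^ 2) * l ^ (p - 3) - 2 * ‖y‖ * l ^ (p - 2) + l ^ (p - 1) := by
  have h1 : l ^ (p - 1) = l ^ (p - 3) * l ^ 2 := by
    rw [← Real.rpow_natCast, ← Real.rpow_add hl]; congr 1; push_cast; ring
  have h2 : l ^ (p - 2) = l ^ (p - 3) * l := by
    conv_rhs => rw [← Real.rpow_one l, ← Real.rpow_mul hl.le, ← Real.rpow_add hl]
    congr 1; ring
  have hn : ∀ z : EuclideanSpace ℝ (Fin n), ‖l⁻¹ • z‖ = ‖z‖ / l := fun z => by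
    rw [norm_smul, norm_inv, Real.norm_of_nonneg hl.le]; ring
  rw [uInf, hn, hn, h1, h2]
  split_ifs with h
  · rw [← add_div, div_le_one hl] at h
    obtain rfl : l = ‖x‖ + ‖y‖ := le_antisymm hlr h
    ring
  · field_simp
    ring

lemma integrand_of_ge {n : ℕ} (p : ℝ) (x y : EuclideanSpace ℝ (Fin n)) {l : ℝ} (hl : 0 < l)
    (hlr : ‖x‖ + ‖y‖ ≤ l) :
    l ^ (p - 1) * uInf (l⁻¹ • x) (l⁻¹ • y) = 0 := by
  have hn : ∀ z : EuclideanSpace ℝ (Fin n), ‖l⁻¹ • z‖ = ‖z‖ / l := fun z => by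
    rw [norm_smul, norm_inv, Real.norm_of_nonneg hl.le]; ring
  rw [uInf, hn, hn, ← add_div, if_pos ((div_le_one hl).2 hlr), mul_zero]

lemma integral_near_zero {n : ℕ} {p : ℝ} (hp : 2 < p) (x y : EuclideanSpace ℝ (Fin n)) {m : ℝ}
    (hm : 0 ≤ m) (hmr : m ≤ ‖x‖ + ‖y‖) :
    IntervalIntegrable (fun l : ℝ => l ^ (p - 1) * uInf (l⁻¹ • x) (l⁻¹ • y)) volume 0 m ∧
    ∫ l in (0 : ℝ)..m, l ^ (p - 1) * uInf (l⁻¹ • x) (l⁻¹ • y)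
      = (‖y‖ ^ 2 - ‖x‖ ^ 2) * (m ^ (p - 2) / (p - 2)) - 2 * ‖y‖ * (m ^ (p - 1) / (p - 1))
        + m ^ p / p := by
  have key : ∀ l ∈ Set.uIoc 0 m, l ^ (p - 1) * uInf (l⁻¹ • x) (l⁻¹ • y)
      = (‖y‖ ^ 2 - ‖x‖ ^ 2) * l ^ (p - 3) - 2 * ‖y‖ * l ^ (p - 2) + l ^ (p - 1) := by
    intro l hl
    rw [Set.uIoc_of_le hm] at hl
    exact integrand_of_le p x y hl.1 (hl.2.trans hmr)
  have i1 : IntervalIntegrable (fun l : ℝ => (‖y‖ ^ 2 - ‖x‖ ^ 2) * l ^ (p - 3)) volume 0 m :=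
    (intervalIntegrable_rpow' (by linarith)).const_mul _
  have i2 : IntervalIntegrable (fun l : ℝ => 2 * ‖y‖ * l ^ (p - 2)) volume 0 m :=
    (intervalIntegrable_rpow' (by linarith)).const_mul _
  have i3 : IntervalIntegrable (fun l : ℝ => l ^ (p - 1)) volume 0 m :=
    intervalIntegrable_rpow' (by linarith)
  refine ⟨((i1.sub i2).add i3).congr fun l hl => (key l hl).symm, ?_⟩
  rw [intervalIntegral.integral_congr_ae (.of_forall key), intervalIntegral.integral_add (i1.sub i2) i3,
    intervalIntegral.integral_sub i1 i2, intervalIntegral.integral_const_mul,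
    intervalIntegral.integral_const_mul,
    integral_rpow (Or.inl (by linarith)), integral_rpow (Or.inl (by linarith)),
    integral_rpow (Or.inl (by linarith)), show p - 3 + 1 = p - 2 by ring,
    show p - 2 + 1 = p - 1 by ring, show p - 1 + 1 = p by ring,
    Real.zero_rpow (by linarith), Real.zero_rpow (by linarith), Real.zero_rpow (by linarith)]
  simp only [sub_zero]

lemma integral_beyond {n : ℕ} (p : ℝ) (x y : EuclideanSpace ℝ (Fin n)) {c : ℝ}
    (hc : ‖x‖ + ‖y‖ ≤ c) :
    IntervalIntegrable (fun l : ℝ => l ^ (p - 1) * uInf (l⁻¹ • x) (l⁻¹ • y)) volume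
      (‖x‖ + ‖y‖) c ∧
    ∫ l in (‖x‖ + ‖y‖)..c, l ^ (p - 1) * uInf (l⁻¹ • x) (l⁻¹ • y) = 0 := by
  have key : ∀ l ∈ Set.uIoc (‖x‖ + ‖y‖) c,
      l ^ (p - 1) * uInf (l⁻¹ • x) (l⁻¹ • y) = (fun _ : ℝ => (0 : ℝ)) l := by
    intro l hl
    rw [Set.uIoc_of_le hc] at hl
    exact integrand_of_ge p x y (lt_of_le_of_lt (by positivity) hl.1) hl.1.le
  refine ⟨(intervalIntegrable_const (c := (0 : ℝ))).congr fun l hl => (key l hl).symm, ?_⟩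
  rw [intervalIntegral.integral_congr_ae (.of_forall key)]
  simp

/-- Explicit formula for
`U(x,y) = (p^p (p−1)^{2−p} (p−2)/4) ∫₀^{1−1/p} λ^{p−1} u_∞(x/λ, y/λ) dλ`, `p > 2`. -/
theorem stmt_15 (p : ℝ) (hp : 2 < p) (n : ℕ) (hn : 1 ≤ n)
    (x y : EuclideanSpace ℝ (Fin n)) :
    (p ^ p * (p - 1) ^ (2 - p) * (p - 2) / 4) *
        ∫ l in (0 : ℝ)..(1 - 1 / p), l ^ (p - 1) * uInf (l⁻¹ • x) (l⁻¹ • y)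
      = if ‖x‖ + ‖y‖ ≤ 1 - 1 / p then
          (1 / 2) * (p / (p - 1)) ^ (p - 1) * (‖y‖ - (p - 1) * ‖x‖) *
            (‖x‖ + ‖y‖) ^ (p - 1)
        else
          (p ^ 2 / 4) * (‖y‖ ^ 2 - ‖x‖ ^ 2 - 2 * (p - 2) * ‖y‖ / p +
            (p - 1) ^ 2 * (p - 2) / p ^ 3) := by
  have hp0 : 0 < p := by linarith
  have hp1 : 0 < p - 1 := by linarith
  have hp2 : 0 < p - 2 := by linarith
  have hc : 1 - 1 / p = (p - 1) / p := by field_simp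
  have hc0 : 0 < (p - 1) / p := by positivity
  have e1 : (p - 1) ^ (2 - p) = ((p - 1) ^ (p - 2))⁻¹ := by
    rw [← Real.rpow_neg hp1.le]; congr 1; ring
  have hP : 0 < p ^ (p - 2) := Real.rpow_pos_of_pos hp0 _
  have hQ : 0 < (p - 1) ^ (p - 2) := Real.rpow_pos_of_pos hp1 _
  have succ1 : ∀ t : ℝ, 0 ≤ t → t ^ (p - 1) = t ^ (p - 2) * t := fun t ht => by
    rw [← Real.rpow_add_one' ht (by linarith)]; congr 1; ring
  have succ2 : ∀ t : ℝ, 0 ≤ t → t ^ p = t ^ (p - 2) * t * t := fun t ht => by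
    rw [← succ1 t ht, ← Real.rpow_add_one' ht (by linarith)]; congr 1; ring
  rw [hc, e1, succ2 p hp0.le]
  split_ifs with h
  · have hr : 0 ≤ ‖x‖ + ‖y‖ := by positivity
    obtain ⟨hi, hv⟩ := integral_near_zero hp x y hr le_rfl
    obtain ⟨hi', hv'⟩ := integral_beyond p x y h
    rw [← integral_add_adjacent_intervals hi hi', hv, hv', succ1 _ hr, succ2 _ hr,
      Real.div_rpow hp0.le hp1.le, succ1 p hp0.le, succ1 (p - 1) hp1.le]
    generalize (‖x‖ + ‖y‖) ^ (p - 2) = R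
    field_simp
    ring
  · rw [(integral_near_zero hp x y hc0.le (not_le.1 h).le).2, succ1 _ hc0.le, succ2 _ hc0.le,
      Real.div_rpow hp1.le hp0.le]
    field_simp
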